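/- arXiv:2308.06942 — 4 statements merged into one kernel-verified Lean document; each statement's English description precedes it below -/
import Mathlib

section
/- For every finite binary string x, the information distance satisfies the density condition: the sum over all strings y ≠ x of 2^{-E(x,y)} is at most 1. -/
/-!
Since `E(x,y) ≥ K(y|x)`, it suffices to bound `∑_y 2^{-K(y|x)}`. Every `y` has some program under
the condition `x`: the machine that halts only on the empty program, with output `y`, is a prefix
machine, and universality lets `U` simulate it. Hence `K(y|x)` is the length of an actual shortest
program `q y`. The map `q` is injective because `U` is single-valued, and its range is prefix-free,
so Kraft's inequality applies. Mathlib states that inequality for finite uniquely decodable codes;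
a prefix-free code that does not contain the empty word is uniquely decodable, while one that
contains the empty word is a singleton.
-/


/-- A prefix (self-delimiting) machine: a partial computable function taking a
program `p` and a conditional input `y`, whose halting programs form a
prefix-free set for each fixed conditional input. -/
structure PrefixMachine where
  eval : List Bool → List Bool →. List Bool
  partrec : Partrec₂ eval
  prefixFree : ∀ y p q : List Bool, (eval p y).Dom → (eval q y).Dom → p <+: q → p = q

/-- A universal prefix machine: it simulates every prefix machine with at most
a constant additive overhead in program length. -/
structure UniversalPrefixMachine extends PrefixMachine where
  universal : ∀ M : PrefixMachine, ∃ c : ℕ, ∀ p y x : List Bool,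
    x ∈ M.eval p y → ∃ q : List Bool, x ∈ eval q y ∧ q.length ≤ p.length + c

/-- Conditional Kolmogorov complexity `K(x|y)`: the length of a shortest
program `p` with `U(p|y) = x`. -/
noncomputable def K (U : UniversalPrefixMachine) (x y : List Bool) : ℕ :=
  sInf {n : ℕ | ∃ p : List Bool, p.length = n ∧ x ∈ U.eval p y}

/-- The information distance `E(x,y) = max {K(x|y), K(y|x)}`. -/
noncomputable def E (U : UniversalPrefixMachine) (x y : List Bool) : ℕ :=
  max (K U x y) (K U y x)

open scoped ENNReal

/-- The prefix machine whose only halting program is the empty one, with output `y` whatever the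
conditional input. -/
def constMachine (y : List Bool) : PrefixMachine where
  eval p _ := ((if p = [] then some y else none : Option (List Bool)) : Part (List Bool))
  partrec := by
    refine Computable.ofOption (Primrec.to_comp ?_)
    exact Primrec.ite (Primrec.eq.comp Primrec.fst (Primrec.const []))
      (Primrec.const _) (Primrec.const _)
  prefixFree := by
    intro z p q hp hq _
    by_cases h1 : p = [] <;> by_cases h2 : q = [] <;> simp_all

/-- The infimum defining `K U y x` is attained: it is over a nonempty set, so it is not the junk
value `sInf ∅ = 0`. -/
lemma exists_shortest_program (U : UniversalPrefixMachine) (y x : List Bool) :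
    ∃ p : List Bool, p.length = K U y x ∧ y ∈ U.eval p x := by
  obtain ⟨c, hc⟩ := U.universal (constMachine y)
  obtain ⟨q, hq, -⟩ := hc [] x y (by simp [constMachine])
  exact Nat.sInf_mem (s := {n : ℕ | ∃ p : List Bool, p.length = n ∧ y ∈ U.eval p x})
    ⟨q.length, q, rfl, hq⟩

lemma uniquelyDecodable_of_prefixFree {α : Type*} {S : Set (List α)}
    (hS : ∀ p ∈ S, ∀ q ∈ S, p <+: q → p = q) (h0 : [] ∉ S) :
    InformationTheory.UniquelyDecodable S := by
  intro L₁
  induction L₁ with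
  | nil =>
    intro L₂ _ h2 h
    cases L₂ with
    | nil => rfl
    | cons b L =>
      have hb : b = [] := by
        have := h.symm
        simp only [List.flatten_nil, List.flatten_cons, List.append_eq_nil_iff] at this
        exact this.1
      exact absurd (hb ▸ h2 b (by simp)) h0
  | cons a L ih =>
    intro L₂ h1 h2 h
    cases L₂ with
    | nil =>
      have ha : a = [] := by
        simp only [List.flatten_nil, List.flatten_cons, List.append_eq_nil_iff] at h
        exact h.1
      exact absurd (ha ▸ h1 a (by simp)) h0
    | cons b L' =>
      have ha : a ∈ S := h1 a (by simp)
      have hb : b ∈ S := h2 b (by simp)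
      simp only [List.flatten_cons] at h
      -- Two prefixes of the same word are comparable.
      have hab : a = b := by
        rcases List.prefix_or_prefix_of_prefix (l₃ := b ++ L'.flatten)
          (h ▸ List.prefix_append a _) (List.prefix_append b _) with h' | h'
        · exact hS a ha b hb h'
        · exact (hS b hb a ha h').symm
      subst hab
      rw [ih L' (fun w hw => h1 w (List.mem_cons_of_mem _ hw))
        (fun w hw => h2 w (List.mem_cons_of_mem _ hw)) (List.append_cancel_left h)]

/-- Kraft's inequality for finite prefix-free binary codes, the code `{[]}` included. -/
lemma kraft_of_prefixFree {S : Finset (List Bool)}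
    (hS : ∀ p ∈ S, ∀ q ∈ S, p <+: q → p = q) :
    ∑ w ∈ S, (1 / 2 : ℝ) ^ w.length ≤ 1 := by
  by_cases h0 : [] ∈ S
  · have : S = {[]} := by
      ext w
      rw [Finset.mem_singleton]
      exact ⟨fun hw => (hS [] h0 w hw List.nil_prefix).symm, fun hw => hw ▸ h0⟩
    simp [this]
  · simpa using InformationTheory.kraft_mcmillan_inequality
      (uniquelyDecodable_of_prefixFree (S := (S : Set (List Bool))) (by simpa using hS)
        (by simpa using h0))

/-- The information distance satisfies the density condition:
for every string `x`, `∑_{y ≠ x} 2^{-E(x,y)} ≤ 1`. -/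
theorem information_distance_density (U : UniversalPrefixMachine) (x : List Bool) :
    ∑' y : {y : List Bool // y ≠ x}, (2 : ℝ≥0∞) ^ (-(E U x y.1 : ℤ)) ≤ 1 := by
  choose q hlen hq using fun y => exists_shortest_program U y x
  have hinj : Function.Injective fun y : {y : List Bool // y ≠ x} => q y.1 := by
    intro y z h
    have hz := hq z.1
    simp only at h
    rw [← h] at hz
    exact Subtype.ext (Part.mem_unique (hq y.1) hz)
  rw [ENNReal.tsum_eq_iSup_sum]
  refine iSup_le fun T => ?_
  have hkraft : ∑ y ∈ T, (1 / 2 : ℝ) ^ (q y.1).length ≤ 1 := by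
    have h := kraft_of_prefixFree (S := T.map ⟨_, hinj⟩) (by
      intro p hp r hr hpr
      obtain ⟨y, -, rfl⟩ := Finset.mem_map.mp hp
      obtain ⟨z, -, rfl⟩ := Finset.mem_map.mp hr
      exact U.prefixFree x _ _ (Part.dom_iff_mem.mpr ⟨_, hq y.1⟩)
        (Part.dom_iff_mem.mpr ⟨_, hq z.1⟩) hpr)
    simpa only [Finset.sum_map, Function.Embedding.coeFn_mk] using h
  calc ∑ y ∈ T, (2 : ℝ≥0∞) ^ (-(E U x y.1 : ℤ))
      ≤ ∑ y ∈ T, ENNReal.ofReal ((1 / 2 : ℝ) ^ (q y.1).length) := by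
        refine Finset.sum_le_sum fun y _ => ?_
        have hE : (q y.1).length ≤ E U x y.1 := (hlen y.1).trans_le (le_max_right _ _)
        rw [ENNReal.ofReal_pow (by norm_num), one_div, ENNReal.ofReal_inv_of_pos (by norm_num),
          ENNReal.ofReal_ofNat, ENNReal.zpow_neg, zpow_natCast, ← ENNReal.inv_pow]
        exact ENNReal.inv_le_inv.mpr (pow_le_pow_right₀ (by norm_num) hE)
    _ = ENNReal.ofReal (∑ y ∈ T, (1 / 2 : ℝ) ^ (q y.1).length) :=
        (ENNReal.ofReal_sum_of_nonneg fun _ _ => by positivity).symm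
    _ ≤ 1 := ENNReal.ofReal_le_one.mpr hkraft
end

section
/- Minimality of the information distance: for every admissible distance D (a computable, symmetric function D from pairs of binary strings to the nonnegative reals satisfying the density condition ∑_y 2^{-D(x,y)} ≤ 1 for every x), there exists a constant c ≥ 0 such that for all strings x, y, E(x,y) ≤ D(x,y) + c. -/
open scoped ENNReal

/-- A real-valued function on pairs of strings is computable if some computable
rational-valued function approximates it to within `(1/2)^n` for every
precision parameter `n`. -/
def ComputableRealFun2 (D : List Bool → List Bool → ℝ) : Prop :=
  ∃ g : List Bool × List Bool × ℕ → ℚ, Computable g ∧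
    ∀ (x y : List Bool) (n : ℕ), |(g (x, y, n) : ℝ) - D x y| ≤ (1 / 2) ^ n

/-! ### Computing with rational numbers -/

theorem partrec_rfind {α : Type*} [Primcodable α] {p : α → ℕ → Bool} (hp : Computable₂ p) :
    Partrec fun a => Nat.rfind fun n => Part.some (p a n) :=
  Partrec.rfind (p := fun a n => Part.some (p a n)) hp

theorem computable_find {α : Type*} [Primcodable α] {p : α → ℕ → Bool} (hp : Computable₂ p)
    (h : ∀ a, ∃ n, p a n = true) : Computable fun a => Nat.find (h a) := by
  refine (partrec_rfind hp).of_eq_tot fun a => ?_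
  refine Nat.mem_rfind.2 ⟨?_, fun {m} hm => ?_⟩
  · simpa using (Nat.find_spec (h a)).symm
  · have := Nat.find_min (h a) hm
    simpa using this

/-- The increasing enumeration of an infinite primitive recursive set of naturals is computable:
each element is found by searching upwards from the previous one. -/
theorem computable_subtype_ofNat (s : Set ℕ) [Infinite s] [DecidablePred (· ∈ s)]
    (hs : PrimrecPred (· ∈ s)) : Computable fun k => (Nat.Subtype.ofNat s k : ℕ) := by
  have hex : ∀ n : ℕ, ∃ m, (decide (n < m ∧ m ∈ s)) = true := by
    intro n
    obtain ⟨m, hm, hnm⟩ := (Set.infinite_coe_iff.1 ‹Infinite s›).exists_gt n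
    exact ⟨m, by simp [hm, hnm]⟩
  have hp : Computable₂ fun n m : ℕ => decide (n < m ∧ m ∈ s) := by
    have : PrimrecPred fun q : ℕ × ℕ => q.1 < q.2 ∧ q.2 ∈ s :=
      (Primrec.nat_lt.comp Primrec.fst Primrec.snd).and (hs.comp Primrec.snd)
    exact (primrecPred_iff_primrec_decide.1 this).to_comp
  have hstep := computable_find hp hex
  have hrec := Computable.nat_rec (f := fun k : ℕ => k)
    (g := fun _ => ((Nat.Subtype.ofNat s 0 : s) : ℕ))
    (h := fun _ q => Nat.find (hex q.2)) Computable.id (Computable.const _)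
    (hstep.comp (Computable.snd.comp Computable.snd)).to₂
  refine hrec.of_eq fun k => ?_
  induction k with
  | zero => rfl
  | succ k ih =>
    change Nat.find (hex (Nat.rec _ _ k)) = _
    rw [Nat.find_eq_iff, ih]
    refine ⟨?_, fun m hm hc => ?_⟩
    · exact decide_eq_true
        ⟨Nat.Subtype.lt_succ_self (Nat.Subtype.ofNat s k), Subtype.coe_prop _⟩
    · simp only [decide_eq_true_eq] at hc
      have := Nat.Subtype.succ_le_of_lt (x := (⟨m, hc.2⟩ : s)) (y := Nat.Subtype.ofNat s k) hc.1
      exact absurd hm (not_lt.2 this)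

/-- A natural number encodes a rational iff its second component is a positive denominator coprime
to the absolute value of the integer coded by its first component. An integer `n ≥ 0` is coded by
`2 * n` and `-(n + 1)` by `2 * n + 1`, so `m / 2 + m % 2` is the absolute value of the integer coded
by `m`. -/
theorem mem_range_encode_rat (m : ℕ) :
    m ∈ Set.range (@Encodable.encode ℚ Rat.instEncodable) ↔
      0 < m.unpair.2 ∧ (m.unpair.1 / 2 + m.unpair.1 % 2).Coprime m.unpair.2 := by
  constructor
  · rintro ⟨q, rfl⟩
    rw [show @Encodable.encode ℚ Rat.instEncodable q = Nat.pair (Encodable.encode q.num) q.den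
      from rfl, Nat.unpair_pair]
    refine ⟨q.den_pos, ?_⟩
    have h := q.reduced
    convert h using 1
    cases q.num with
    | ofNat n =>
      change 2 * n / 2 + 2 * n % 2 = n
      omega
    | negSucc n =>
      change (2 * n + 1) / 2 + (2 * n + 1) % 2 = n + 1
      omega
  · rintro ⟨h1, h2⟩
    obtain ⟨a, ha, hn⟩ : ∃ a : ℤ, Encodable.encode a = m.unpair.1 ∧
        a.natAbs = m.unpair.1 / 2 + m.unpair.1 % 2 := by
      rcases Nat.even_or_odd' m.unpair.1 with ⟨c, hc | hc⟩
      · refine ⟨Int.ofNat c, hc.symm, ?_⟩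
        change c = _
        omega
      · refine ⟨Int.negSucc c, hc.symm, ?_⟩
        change c + 1 = _
        omega
    refine ⟨⟨a, m.unpair.2, h1.ne', hn ▸ h2⟩, ?_⟩
    change Nat.pair (Encodable.encode a) m.unpair.2 = m
    rw [ha, Nat.pair_unpair]

theorem primrec_coprime : PrimrecRel Nat.Coprime := by
  have hR : PrimrecRel fun (d : ℕ) (q : ℕ × ℕ) => ¬ (q.1 % d = 0 ∧ q.2 % d = 0 ∧ d ≠ 1) := by
    have h1 : Primrec fun x : ℕ × ℕ × ℕ => x.2.1 % x.1 :=
      Primrec.nat_mod.comp (Primrec.fst.comp Primrec.snd) Primrec.fst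
    have h2 : Primrec fun x : ℕ × ℕ × ℕ => x.2.2 % x.1 :=
      Primrec.nat_mod.comp (Primrec.snd.comp Primrec.snd) Primrec.fst
    exact ((Primrec.eq.comp h1 (Primrec.const 0)).and
      ((Primrec.eq.comp h2 (Primrec.const 0)).and
        (Primrec.eq.comp Primrec.fst (Primrec.const 1)).not)).not
  have hbound : Primrec fun q : ℕ × ℕ => (q.1 + q.2).succ :=
    Primrec.succ.comp (Primrec.nat_add.comp Primrec.fst Primrec.snd)
  have hid : Primrec fun q : ℕ × ℕ => q := Primrec.id
  refine PrimrecPred.of_eq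
    (hR.forall_mem_list.comp (Primrec.list_range.comp hbound) hid) fun q => ?_
  simp only [List.mem_range]
  obtain ⟨a, b⟩ := q
  constructor
  · intro h
    -- the gcd is a common divisor below the bound `a + b + 1`, also when `a = 0` or `b = 0`
    by_contra hc
    refine h (Nat.gcd a b) ?_ ⟨?_, ?_, hc⟩
    · rcases Nat.eq_zero_or_pos a with rfl | ha
      · simp
      · have := Nat.gcd_le_left b ha
        change _ < a + b + 1
        omega
    · exact Nat.mod_eq_zero_of_dvd (Nat.gcd_dvd_left a b)
    · exact Nat.mod_eq_zero_of_dvd (Nat.gcd_dvd_right a b)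
  · rintro h d - ⟨ha, hb, hd⟩
    exact hd (Nat.eq_one_of_dvd_coprimes h (Nat.dvd_of_mod_eq_zero ha) (Nat.dvd_of_mod_eq_zero hb))

/-- The map `q ↦ pair (encode q.num) q.den` is computable with respect to `Primcodable ℚ`, whose own
encoding of `q` is the rank of this number among all such pairs. -/
theorem computable_encode_rat : Computable (@Encodable.encode ℚ Rat.instEncodable) := by
  let _ := @Encodable.decidableRangeEncode ℚ Rat.instEncodable
  have : Infinite (Set.range (@Encodable.encode ℚ Rat.instEncodable)) :=
    Infinite.of_injective _
      (Equiv.ofInjective _ (@Encodable.encode_injective ℚ Rat.instEncodable)).injective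
  have hu1 : Primrec fun m : ℕ => m.unpair.1 := Primrec.fst.comp Primrec.unpair
  have hu2 : Primrec fun m : ℕ => m.unpair.2 := Primrec.snd.comp Primrec.unpair
  have hs : PrimrecPred (· ∈ Set.range (@Encodable.encode ℚ Rat.instEncodable)) := by
    refine PrimrecPred.of_eq ?_ fun m => (mem_range_encode_rat m).symm
    exact (Primrec.nat_lt.comp (Primrec.const 0) hu2).and
      (primrec_coprime.comp (Primrec.nat_add.comp (Primrec.nat_div.comp hu1 (Primrec.const 2))
        (Primrec.nat_mod.comp hu1 (Primrec.const 2))) hu2)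
  refine ((computable_subtype_ofNat _ hs).comp Computable.encode).of_eq fun q => ?_
  -- decoding the rank of `q` amounts to taking the element of that rank in the range of the
  -- encoding by pairs and decoding it there, so the enumerated element is the pair encoding of `q`
  have h := Denumerable.ofNat_encode q
  have h' : (@Encodable.equivRangeEncode ℚ Rat.instEncodable).symm
      (Nat.Subtype.ofNat _ (@Encodable.encode ℚ Primcodable.toEncodable q)) = q := h
  rw [Equiv.symm_apply_eq] at h'
  exact congrArg Subtype.val h'

/-- Rationals `q ≥ -1` can be rounded computably to a natural number at distance at most `1`. -/
theorem exists_computable_approx : ∃ f : ℚ → ℕ, Computable f ∧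
    ∀ q : ℚ, -1 ≤ q → q - 1 ≤ f q ∧ (f q : ℚ) ≤ q + 1 := by
  -- half the code of the numerator is `num` when `num ≥ 0`; when `num = -(n + 1)` it is `n`, which is
  -- less than `den` because `q ≥ -1`, so the quotient is `0`
  refine ⟨fun q => (Encodable.encode q.num / 2) / q.den, ?_, fun q hq => ?_⟩
  · have hP : Primrec fun m : ℕ => m.unpair.1 / 2 / m.unpair.2 :=
      Primrec.nat_div.comp (Primrec.nat_div.comp (Primrec.fst.comp Primrec.unpair)
        (Primrec.const 2)) (Primrec.snd.comp Primrec.unpair)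
    refine (hP.to_comp.comp computable_encode_rat).of_eq fun q => ?_
    rw [show @Encodable.encode ℚ Rat.instEncodable q = Nat.pair (Encodable.encode q.num) q.den
      from rfl, Nat.unpair_pair]
  · have hd : (0 : ℚ) < q.den := by exact_mod_cast q.den_pos
    have hqd : q * q.den = q.num := Rat.mul_den_eq_num q
    beta_reduce
    cases hnum : q.num with
    | ofNat n =>
      rw [show Encodable.encode (Int.ofNat n) = 2 * n from rfl, Nat.mul_div_cancel_left n two_pos]
      have hqn : q = (n : ℚ) / q.den := by
        rw [eq_div_iff hd.ne', hqd, hnum]; simp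
      have h1 : ((n / q.den : ℕ) : ℚ) ≤ (n : ℚ) / q.den := Nat.cast_div_le
      have h2 : (n : ℚ) / q.den < ((n / q.den : ℕ) : ℚ) + 1 := by
        rw [div_lt_iff₀ hd]
        have := Nat.lt_mul_div_succ n q.den_pos
        rw [mul_comm] at this
        exact_mod_cast this
      rw [← hqn] at h1 h2
      constructor <;> linarith
    | negSucc n =>
      rw [show Encodable.encode (Int.negSucc n) = 2 * n + 1 from rfl]
      have hqn : q * q.den = -((n : ℚ) + 1) := by
        rw [hqd, hnum]; push_cast; ring
      have hlt : n < q.den := by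
        have : (n : ℚ) < q.den := by nlinarith
        exact_mod_cast this
      have h0 : (2 * n + 1) / 2 / q.den = 0 := by
        rw [Nat.div_eq_zero_iff]; right; omega
      rw [h0]
      have hneg : q < 0 := by nlinarith [(Nat.cast_nonneg n : (0 : ℚ) ≤ n)]
      constructor <;> push_cast <;> linarith

/-! ### Binary values of strings -/

/-- The number with binary expansion `p`, most significant bit first. -/
def bitsVal (p : List Bool) : ℕ := p.foldl (fun a b => 2 * a + b.toNat) 0

theorem foldl_bits (p : List Bool) (a : ℕ) :
    p.foldl (fun a b => 2 * a + b.toNat) a = a * 2 ^ p.length + bitsVal p := by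
  induction p generalizing a with
  | nil => simp [bitsVal]
  | cons b p ih =>
    rw [bitsVal, List.foldl_cons, List.foldl_cons, ih, ih (2 * 0 + b.toNat), List.length_cons]
    ring

theorem bitsVal_append (p r : List Bool) :
    bitsVal (p ++ r) = bitsVal p * 2 ^ r.length + bitsVal r := by
  rw [bitsVal, List.foldl_append, foldl_bits r, ← bitsVal]

theorem bitsVal_lt (p : List Bool) : bitsVal p < 2 ^ p.length := by
  induction p using List.reverseRecOn with
  | nil => simp [bitsVal]
  | append_singleton p b ih =>
    rw [bitsVal_append, List.length_append, pow_add]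
    have : bitsVal [b] < 2 := by cases b <;> simp [bitsVal]
    simp only [List.length_singleton, pow_one]
    omega

theorem exists_bits (L k : ℕ) (hk : k < 2 ^ L) :
    ∃ p : List Bool, p.length = L ∧ bitsVal p = k := by
  induction L generalizing k with
  | zero => exact ⟨[], rfl, by simp at hk; simp [bitsVal, hk]⟩
  | succ L ih =>
    obtain ⟨p, hp, hv⟩ := ih (k / 2) (by rw [pow_succ] at hk; omega)
    refine ⟨p ++ [decide (k % 2 = 1)], by simp [hp], ?_⟩
    rw [bitsVal_append, hv]
    rcases Nat.mod_two_eq_zero_or_one k with h | h <;> simp [bitsVal, h] <;> omega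

theorem primrec_bitsVal : Primrec bitsVal := by
  have h : Primrec₂ fun (_ : List Bool) (q : ℕ × Bool) => 2 * q.1 + q.2.toNat :=
    (Primrec.nat_add.comp
      (Primrec.nat_mul.comp (Primrec.const 2) (Primrec.fst.comp Primrec.snd))
      ((Primrec.dom_bool Bool.toNat).comp (Primrec.snd.comp Primrec.snd))).to₂
  exact Primrec.list_foldl Primrec.id (Primrec.const 0) h

theorem primrec_two_pow : Primrec fun n : ℕ => 2 ^ n :=
  (Primrec₂.unpaired'.1 Nat.Primrec.pow).comp (Primrec.const 2) Primrec.id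

/-! ### Shannon-Fano codewords -/

/-- Adding `2^{-k}` to the dyadic rational `a / 2^b` represented by the pair `s = (a, b)`. -/
def cumulStep (s : ℕ × ℕ) (k : ℕ) : ℕ × ℕ := (s.1 * 2 ^ k + 2 ^ s.2, s.2 + k)

theorem primrec_cumulStep : Primrec₂ cumulStep := by
  have h1 : Primrec fun b : (ℕ × ℕ) × ℕ => b.1.1 := Primrec.fst.comp Primrec.fst
  have h2 : Primrec fun b : (ℕ × ℕ) × ℕ => b.1.2 := Primrec.snd.comp Primrec.fst
  have h : Primrec fun b : (ℕ × ℕ) × ℕ => (b.1.1 * 2 ^ b.2 + 2 ^ b.1.2, b.1.2 + b.2) :=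
    (Primrec.nat_add.comp (Primrec.nat_mul.comp h1 (primrec_two_pow.comp Primrec.snd))
      (primrec_two_pow.comp h2)).pair (Primrec.nat_add.comp h2 Primrec.snd)
  exact h

/-- The partial sum `∑_{i<n} 2^{-w i}` as a pair `(a, b)` representing `a / 2^b`, not in lowest
terms. -/
def cumul (w : ℕ → ℕ) (n : ℕ) : ℕ × ℕ :=
  Nat.rec (0, 0) (fun i s => cumulStep s (w i)) n

/-- The index `s` of the dyadic interval `[s, s + 1] / 2^{w n + 1}` assigned to `n`: the first one
to the right of `∑_{i<n} 2^{-w i}`, the left endpoint being strictly larger than this sum. -/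
def slot (w : ℕ → ℕ) (n : ℕ) : ℕ :=
  (cumul w n).1 * 2 ^ (w n + 1) / 2 ^ (cumul w n).2 + 1

theorem cumul_eq (w : ℕ → ℕ) (n : ℕ) :
    ((cumul w n).1 : ℝ) / 2 ^ (cumul w n).2 = ∑ i ∈ Finset.range n, (1 / 2 : ℝ) ^ w i := by
  induction n with
  | zero => simp [cumul]
  | succ n ih =>
    rw [Finset.sum_range_succ, ← ih]
    change (((cumul w n).1 * 2 ^ w n + 2 ^ (cumul w n).2 : ℕ) : ℝ) / 2 ^ ((cumul w n).2 + w n) = _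
    push_cast
    rw [pow_add, one_div, inv_pow]
    field_simp

theorem lt_slot (w : ℕ → ℕ) (n : ℕ) :
    ∑ i ∈ Finset.range n, (1 / 2 : ℝ) ^ w i < slot w n / 2 ^ (w n + 1) := by
  rw [← cumul_eq, lt_div_iff₀ (by positivity), div_mul_eq_mul_div, div_lt_iff₀ (by positivity)]
  have : (cumul w n).1 * 2 ^ (w n + 1) < slot w n * 2 ^ (cumul w n).2 := by
    rw [mul_comm (slot w n)]
    exact Nat.lt_mul_div_succ _ (by positivity)
  exact_mod_cast this

/-- The interval assigned to `n` ends before `∑_{i≤n} 2^{-w i}`: the gap between consecutive partial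
sums has twice its length, so it contains an aligned dyadic interval. -/
theorem slot_le (w : ℕ → ℕ) (n : ℕ) :
    ((slot w n : ℝ) + 1) / 2 ^ (w n + 1) ≤ ∑ i ∈ Finset.range (n + 1), (1 / 2 : ℝ) ^ w i := by
  have h : (((cumul w n).1 * 2 ^ (w n + 1) / 2 ^ (cumul w n).2 : ℕ) : ℝ) ≤
      (cumul w n).1 / 2 ^ (cumul w n).2 * 2 ^ (w n + 1) := by
    refine Nat.cast_div_le.trans (le_of_eq ?_)
    push_cast
    ring
  rw [cumul_eq] at h
  rw [Finset.sum_range_succ, div_le_iff₀ (by positivity), add_mul, slot]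
  have h2 : (1 / 2 : ℝ) ^ w n * 2 ^ (w n + 1) = 2 := by
    rw [pow_succ, ← mul_assoc, ← mul_pow]; norm_num
  rw [h2]
  push_cast at h ⊢
  linarith

/-- The string `p` is the codeword of `n` for the length function `w`: it has `w n + 1` bits and
names the dyadic interval assigned to `n`. -/
def IsCode (w : ℕ → ℕ) (n : ℕ) (p : List Bool) : Prop :=
  p.length = w n + 1 ∧ bitsVal p = slot w n

instance (w : ℕ → ℕ) (n : ℕ) (p : List Bool) : Decidable (IsCode w n p) :=
  inferInstanceAs (Decidable (_ ∧ _))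

/-- The code is injective and prefix-free. If `p` is a prefix of `q`, then the left endpoint of the
interval of `q` lies in the interval of `p`, whereas distinct indices have disjoint intervals. -/
theorem IsCode.unique {w : ℕ → ℕ} {n m : ℕ} {p q : List Bool} (hp : IsCode w n p)
    (hq : IsCode w m q) (h : p <+: q) : n = m ∧ p = q := by
  obtain ⟨r, rfl⟩ := h
  have hmono : Monotone fun n => ∑ i ∈ Finset.range n, (1 / 2 : ℝ) ^ w i :=
    fun a b hab => Finset.sum_le_sum_of_subset_of_nonneg (Finset.range_subset_range.2 hab)
      fun _ _ _ => by positivity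
  -- the left endpoint of the interval of `p ++ r`, as an offset inside the interval of `p`
  have hval : (bitsVal (p ++ r) : ℝ) / 2 ^ (p ++ r).length =
      (bitsVal p + bitsVal r / 2 ^ r.length) / 2 ^ p.length := by
    rw [bitsVal_append, List.length_append, pow_add]
    push_cast
    field_simp
  have hr0 : (0 : ℝ) ≤ bitsVal r / 2 ^ r.length := by positivity
  have hr1 : (bitsVal r : ℝ) / 2 ^ r.length < 1 := by
    rw [div_lt_one (by positivity)]
    exact_mod_cast bitsVal_lt r
  have hlo : (bitsVal p : ℝ) / 2 ^ p.length ≤ bitsVal (p ++ r) / 2 ^ (p ++ r).length := by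
    rw [hval]; gcongr; linarith
  have hhi : (bitsVal (p ++ r) : ℝ) / 2 ^ (p ++ r).length < (bitsVal p + 1) / 2 ^ p.length := by
    rw [hval]; gcongr
  rw [hp.1, hq.1, hp.2, hq.2] at hlo hhi
  have hnm : n = m := by
    rcases lt_trichotomy n m with hlt | heq | hlt
    · have h1 := hmono (Nat.succ_le_of_lt hlt)
      have h2 := lt_slot w m
      have h3 := slot_le w n
      simp only [Nat.succ_eq_add_one] at h1
      linarith
    · exact heq
    · have h1 := hmono (Nat.succ_le_of_lt hlt)
      have h2 := lt_slot w n
      have h3 := slot_le w m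
      have h4 : (slot w m : ℝ) / 2 ^ (w m + 1) ≤ (slot w m + 1) / 2 ^ (w m + 1) := by
        gcongr; linarith
      simp only [Nat.succ_eq_add_one] at h1
      linarith
  subst hnm
  refine ⟨rfl, ?_⟩
  have := hp.1.trans hq.1.symm
  rw [List.length_append] at this
  rw [List.length_eq_zero_iff.1 (by omega : r.length = 0), List.append_nil]

/-- Kraft inequality up to `n`: the right endpoint of the interval of `n` is then at most `1`, so its
index fits in `w n + 1` bits. -/
theorem exists_isCode (w : ℕ → ℕ) (n : ℕ)
    (hw : ∑ i ∈ Finset.range (n + 1), (1 / 2 : ℝ) ^ w i ≤ 1) : ∃ p, IsCode w n p := by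
  refine exists_bits _ _ ?_
  have h := (slot_le w n).trans hw
  rw [div_le_one (by positivity)] at h
  have h' : slot w n + 1 ≤ 2 ^ (w n + 1) := by exact_mod_cast h
  omega

/-! ### The prefix machine of a code -/

theorem computable_cumul {F : List Bool → ℕ → ℕ} (hF : Computable₂ F) :
    Computable₂ fun x n => cumul (F x) n := by
  have hs : Computable fun b : (List Bool × ℕ) × ℕ × ℕ × ℕ => b.2.2 :=
    Computable.snd.comp Computable.snd
  have hw : Computable fun b : (List Bool × ℕ) × ℕ × ℕ × ℕ => F b.1.1 b.2.1 :=
    Computable₂.comp hF (Computable.fst.comp Computable.fst) (Computable.fst.comp Computable.snd)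
  have hstep : Computable fun b : (List Bool × ℕ) × ℕ × ℕ × ℕ => cumulStep b.2.2 (F b.1.1 b.2.1) :=
    Computable₂.comp primrec_cumulStep.to_comp hs hw
  exact Computable.nat_rec (f := fun a : List Bool × ℕ => a.2) (g := fun _ => ((0, 0) : ℕ × ℕ))
    (h := fun a q => cumulStep q.2 (F a.1 q.1)) Computable.snd (Computable.const _) hstep.to₂

theorem primrec_slot_formula :
    Primrec₂ fun (k : ℕ) (s : ℕ × ℕ) => s.1 * 2 ^ (k + 1) / 2 ^ s.2 + 1 := by
  have hk : Primrec fun b : ℕ × ℕ × ℕ => b.1 + 1 := Primrec.succ.comp Primrec.fst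
  have h1 : Primrec fun b : ℕ × ℕ × ℕ => b.2.1 := Primrec.fst.comp Primrec.snd
  have h2 : Primrec fun b : ℕ × ℕ × ℕ => b.2.2 := Primrec.snd.comp Primrec.snd
  have h3 : Primrec fun b : ℕ × ℕ × ℕ => b.2.1 * 2 ^ (b.1 + 1) :=
    Primrec.nat_mul.comp h1 (primrec_two_pow.comp hk)
  have h4 : Primrec fun b : ℕ × ℕ × ℕ => b.2.1 * 2 ^ (b.1 + 1) / 2 ^ b.2.2 :=
    Primrec.nat_div.comp h3 (primrec_two_pow.comp h2)
  exact Primrec.succ.comp h4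

theorem computable_isCode {F : List Bool → ℕ → ℕ} (hF : Computable₂ F) :
    Computable₂ fun (a : List Bool × List Bool) (n : ℕ) => decide (IsCode (F a.2) n a.1) := by
  have hx : Computable fun b : (List Bool × List Bool) × ℕ => b.1.2 :=
    Computable.snd.comp Computable.fst
  have hp : Computable fun b : (List Bool × List Bool) × ℕ => b.1.1 :=
    Computable.fst.comp Computable.fst
  have hw : Computable fun b : (List Bool × List Bool) × ℕ => F b.1.2 b.2 :=
    Computable₂.comp hF hx Computable.snd
  have hslot : Computable fun b : (List Bool × List Bool) × ℕ => slot (F b.1.2) b.2 :=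
    (Computable₂.comp primrec_slot_formula.to_comp hw
      (Computable₂.comp (computable_cumul hF) hx Computable.snd)).of_eq fun _ => rfl
  have hpair : Computable fun b : (List Bool × List Bool) × ℕ =>
      ((b.1.1.length, bitsVal b.1.1), (F b.1.2 b.2 + 1, slot (F b.1.2) b.2)) :=
    ((Primrec.list_length.to_comp.comp hp).pair (primrec_bitsVal.to_comp.comp hp)).pair
      ((Computable.succ.comp hw).pair hslot)
  have heq : Computable fun q : (ℕ × ℕ) × (ℕ × ℕ) => decide (q.1 = q.2) :=
    (primrecPred_iff_primrec_decide.1 (Primrec.eq (α := ℕ × ℕ))).to_comp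
  refine (heq.comp hpair).of_eq fun b => ?_
  exact decide_eq_decide.2 Prod.ext_iff

/-- A computable family of code lengths satisfying the Kraft inequality for each `x` is realised by a
prefix machine, up to one extra bit. Strings are indexed by their encodings. -/
theorem exists_machine (F : List Bool → ℕ → ℕ) (hF : Computable₂ F)
    (hsum : ∀ x n, ∑ i ∈ Finset.range n, (1 / 2 : ℝ) ^ F x i ≤ 1) :
    ∃ M : PrefixMachine, ∀ x y : List Bool, ∃ p : List Bool,
      p.length = F x (Encodable.encode y) + 1 ∧ y ∈ M.eval p x := by
  -- the program `a.1` on conditional input `a.2` is decoded by searching for the index it encodes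
  let search (a : List Bool × List Bool) : Part ℕ :=
    Nat.rfind fun n => Part.some (decide (IsCode (F a.2) n a.1))
  have hsearch : Partrec search :=
    partrec_rfind (computable_isCode hF)
  have hspec : ∀ p x n, n ∈ search (p, x) → IsCode (F x) n p := by
    intro p x n hn
    simpa using (Nat.mem_rfind.1 hn).1
  have hmem : ∀ p x n, IsCode (F x) n p → n ∈ search (p, x) := by
    intro p x n hn
    refine Nat.mem_rfind.2 ⟨by simpa using hn, fun {m} hm => ?_⟩
    have : ¬ IsCode (F x) m p := fun h => hm.ne (h.unique hn List.prefix_rfl).1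
    simpa using this
  have hout : Computable fun n : ℕ => ((Encodable.decode n : Option (List Bool)).getD []) :=
    Computable.option_getD Computable.decode (Computable.const _)
  refine ⟨⟨fun p x => (search (p, x)).map fun n => (Encodable.decode n).getD [],
    hsearch.map (hout.comp Computable.snd).to₂, ?_⟩, ?_⟩
  · intro x p q hp hq hpq
    have hp' := hspec p x _ (Part.get_mem (o := search (p, x)) hp)
    have hq' := hspec q x _ (Part.get_mem (o := search (q, x)) hq)
    exact (hp'.unique hq' hpq).2
  · intro x y
    obtain ⟨p, hp⟩ := exists_isCode (F x) (Encodable.encode y) (hsum x _)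
    refine ⟨p, hp.1, ?_⟩
    exact (Part.mem_map_iff _).2 ⟨_, hmem p x _ hp, by simp⟩

/-! ### The distance as a code length -/

/-- Kraft inequality for code lengths `h y ≥ D y + 1`. They are placed at the encodings of the
strings `y`; an index `i` that encodes no string gets length `i + 2`. Each of the two families has
total weight at most `1/2`. The map `decode₂` is the exact partial inverse of `encode`, so every
string is counted once. -/
theorem sum_pow_le_one {D : List Bool → ℝ} (hdens : ∑' y, (2 : ℝ≥0∞) ^ (-D y) ≤ 1)
    {h : List Bool → ℕ} (hh : ∀ y, D y + 1 ≤ h y) (n : ℕ) :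
    ∑ i ∈ Finset.range n,
      (1 / 2 : ℝ) ^ ((Encodable.decode₂ (List Bool) i).elim (i + 2) h) ≤ 1 := by
  have hsmall : ∑ i ∈ Finset.range n, (1 / 2 : ℝ) ^ (i + 2) ≤ 1 / 2 := by
    simp_rw [pow_add]
    rw [← Finset.sum_mul]
    have := sum_geometric_two_le n
    linarith
  -- the weight carried by the indices that encode strings
  let W : ℕ → ℝ := fun i => (Encodable.decode₂ (List Bool) i).elim 0 fun y => (1 / 2) ^ h y
  have hW0 : ∀ i, 0 ≤ W i := fun i => by
    simp only [W]; cases Encodable.decode₂ (List Bool) i <;> simp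
  have hle : ∀ i, (1 / 2 : ℝ) ^ ((Encodable.decode₂ (List Bool) i).elim (i + 2) h) ≤
      W i + (1 / 2) ^ (i + 2) := fun i => by
    simp only [W]; cases Encodable.decode₂ (List Bool) i <;> simp
  have hmain : ∑ i ∈ Finset.range n, W i ≤ 1 / 2 := by
    have hbound : ∀ y, ENNReal.ofReal ((1 / 2) ^ h y) ≤ 2⁻¹ * (2 : ℝ≥0∞) ^ (-D y) := by
      intro y
      rw [one_div, ENNReal.ofReal_pow (by norm_num), ENNReal.ofReal_inv_of_pos two_pos,
        ENNReal.ofReal_ofNat, ← ENNReal.inv_pow, ← ENNReal.rpow_natCast, ← ENNReal.rpow_neg,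
        ← ENNReal.rpow_neg_one 2, ← ENNReal.rpow_add _ _ two_ne_zero ENNReal.ofNat_ne_top]
      refine ENNReal.rpow_le_rpow_of_exponent_le one_le_two ?_
      linarith [hh y]
    have htsum : ∑' i, ENNReal.ofReal (W i) ≤ 2⁻¹ := by
      have hinj := Encodable.encode_injective (α := List Bool)
      rw [← hinj.tsum_eq]
      · calc ∑' y : List Bool, ENNReal.ofReal (W (Encodable.encode y))
            ≤ ∑' y : List Bool, 2⁻¹ * (2 : ℝ≥0∞) ^ (-D y) :=
              ENNReal.tsum_le_tsum fun y => by simpa [W] using hbound y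
          _ ≤ 2⁻¹ * 1 := by rw [ENNReal.tsum_mul_left]; gcongr
          _ = 2⁻¹ := mul_one _
      · intro i hi
        rw [← Encodable.decode₂_ne_none_iff]
        rintro hnone
        exact hi (by simp [W, hnone])
    have hfin : ENNReal.ofReal (∑ i ∈ Finset.range n, W i) ≤ ENNReal.ofReal (1 / 2) := by
      rw [ENNReal.ofReal_sum_of_nonneg fun i _ => hW0 i, one_div,
        ENNReal.ofReal_inv_of_pos two_pos, ENNReal.ofReal_ofNat]
      exact (ENNReal.sum_le_tsum _).trans htsum
    exact (ENNReal.ofReal_le_ofReal_iff (by norm_num)).1 hfin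
  calc _ ≤ ∑ i ∈ Finset.range n, (W i + (1 / 2) ^ (i + 2)) := Finset.sum_le_sum fun i _ => hle i
    _ ≤ 1 := by rw [Finset.sum_add_distrib]; linarith

/-- The one-sided bound `K(y|x) ≤ D(x,y) + c`, which needs no symmetry of `D`. -/
theorem exists_K_le (U : UniversalPrefixMachine)
    (D : List Bool → List Bool → ℝ)
    (hcomp : ComputableRealFun2 D)
    (hnonneg : ∀ x y : List Bool, 0 ≤ D x y)
    (hdens : ∀ x : List Bool, ∑' y : List Bool, (2 : ℝ≥0∞) ^ (-(D x y)) ≤ 1) :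
    ∃ c : ℕ, ∀ x y : List Bool, (K U y x : ℝ) ≤ D x y + c := by
  obtain ⟨g, hg, hgD⟩ := hcomp
  obtain ⟨f, hf, hfq⟩ := exists_computable_approx
  -- precision `(1/2)^0 = 1` and rounding each cost at most `1`
  have hfD : ∀ x y, D x y - 2 ≤ f (g (x, y, 0)) ∧ (f (g (x, y, 0)) : ℝ) ≤ D x y + 2 := by
    intro x y
    have h1 := abs_le.1 (hgD x y 0)
    rw [pow_zero] at h1
    have h2 : -1 ≤ g (x, y, 0) := by
      have : (-1 : ℝ) ≤ g (x, y, 0) := by linarith [hnonneg x y]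
      exact_mod_cast this
    obtain ⟨h3, h4⟩ := hfq _ h2
    have h3' : (g (x, y, 0) : ℝ) - 1 ≤ f (g (x, y, 0)) := by exact_mod_cast h3
    have h4' : (f (g (x, y, 0)) : ℝ) ≤ g (x, y, 0) + 1 := by exact_mod_cast h4
    constructor <;> linarith
  -- `+ 3` turns the lower bound `D - 2` into `D + 1`, as the Kraft inequality requires
  let F : List Bool → ℕ → ℕ := fun x n =>
    (Encodable.decode₂ (List Bool) n).elim (n + 2) fun y => f (g (x, y, 0)) + 3
  have hF : Computable₂ F := by
    have h1 : Computable fun a : List Bool × ℕ => Encodable.decode₂ (List Bool) a.2 :=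
      Primrec.decode₂.to_comp.comp Computable.snd
    have h2 : Computable fun a : List Bool × ℕ => a.2 + 2 :=
      Computable.succ.comp (Computable.succ.comp Computable.snd)
    have h3 : Computable₂ fun (a : List Bool × ℕ) (y : List Bool) => f (g (a.1, y, 0)) + 3 := by
      have hg' : Computable fun b : (List Bool × ℕ) × List Bool => g (b.1.1, b.2, 0) :=
        hg.comp ((Computable.fst.comp Computable.fst).pair
          (Computable.snd.pair (Computable.const 0)))
      exact (Primrec.nat_add.comp Primrec.id (Primrec.const 3)).to_comp.comp (hf.comp hg')
    refine (Computable.option_casesOn h1 h2 h3).of_eq fun a => ?_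
    simp only [F]
    cases Encodable.decode₂ (List Bool) a.2 <;> rfl
  obtain ⟨M, hM⟩ := exists_machine F hF fun x n =>
    sum_pow_le_one (hdens x) (h := fun y => f (g (x, y, 0)) + 3)
      (fun y => by push_cast; linarith [(hfD x y).1]) n
  obtain ⟨c, hc⟩ := U.universal M
  -- `6 = 2 + 3 + 1`: approximation error, shift of the lengths, extra bit of the code
  refine ⟨c + 6, fun x y => ?_⟩
  obtain ⟨p, hp, hpy⟩ := hM x y
  obtain ⟨q, hq, hlen⟩ := hc p x y hpy
  have hK : K U y x ≤ q.length := Nat.sInf_le ⟨q, rfl, hq⟩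
  have hFy : F x (Encodable.encode y) = f (g (x, y, 0)) + 3 := by simp [F]
  have hle : K U y x ≤ f (g (x, y, 0)) + 4 + c := by omega
  have hle' : (K U y x : ℝ) ≤ f (g (x, y, 0)) + 4 + c := by exact_mod_cast hle
  push_cast
  linarith [(hfD x y).2]

/-- Minimality of the information distance: for every admissible distance `D`
(computable, nonnegative, symmetric, and satisfying the density condition
`∑_y 2^{-D(x,y)} ≤ 1` for every `x`), there is a constant `c ≥ 0` with
`E(x,y) ≤ D(x,y) + c` for all strings `x, y`. -/
theorem information_distance_minimal (U : UniversalPrefixMachine)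
    (D : List Bool → List Bool → ℝ)
    (hcomp : ComputableRealFun2 D)
    (hnonneg : ∀ x y : List Bool, 0 ≤ D x y)
    (hsym : ∀ x y : List Bool, D x y = D y x)
    (hdens : ∀ x : List Bool, ∑' y : List Bool, (2 : ℝ≥0∞) ^ (-(D x y)) ≤ 1) :
    ∃ c : ℕ, ∀ x y : List Bool, (E U x y : ℝ) ≤ D x y + c := by
  obtain ⟨c, hc⟩ := exists_K_le U D hcomp hnonneg hdens
  refine ⟨c, fun x y => ?_⟩
  rw [E, Nat.cast_max]
  exact max_le (hsym x y ▸ hc y x) (hc x y)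
end

section
/- Conditional coding theorem: for every upper-semicomputable function f on pairs of binary strings satisfying ∑_y 2^{-f(x,y)} ≤ 1 for every x, there exists a constant c ≥ 0 such that K(y|x) ≤ f(x,y) + c for all strings x, y. -/
open scoped ENNReal

/-- A real-valued function on pairs of strings is upper-semicomputable if there
is a computable (rational-valued) sequence of functions decreasing pointwise
to it. -/
def UpperSemicomputable2 (f : List Bool → List Bool → ℝ) : Prop :=
  ∃ g : List Bool × List Bool × ℕ → ℚ, Computable g ∧
    (∀ x y : List Bool, Antitone fun n : ℕ => g (x, y, n)) ∧
    (∀ x y : List Bool,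
      Filter.Tendsto (fun n : ℕ => (g (x, y, n) : ℝ)) Filter.atTop (nhds (f x y)))

/-! ### Computability of comparison on the rationals -/

/-- The code of a rational number before it is renumbered to make `ℚ` denumerable: the pair of the
code of the numerator (`2 * n` for `n`, `2 * n + 1` for `-(n + 1)`) and the denominator. -/
def ratCode (q : ℚ) : ℕ := @Encodable.encode ℚ Rat.instEncodable q

/-- `m` is a value of `ratCode`; `((Nat.unpair m).1 + 1) / 2` is the absolute value of the
numerator. -/
def IsRatCode (m : ℕ) : Prop :=
  0 < (Nat.unpair m).2 ∧ Nat.Coprime (((Nat.unpair m).1 + 1) / 2) (Nat.unpair m).2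

instance : DecidablePred IsRatCode := fun m => by unfold IsRatCode; infer_instance

theorem natAbs_eq_code (z : ℤ) : z.natAbs = (Equiv.intEquivNat z + 1) / 2 := by
  cases z with
  | ofNat n =>
    change n = (2 * n + 1) / 2
    lia
  | negSucc n =>
    change n + 1 = (2 * n + 1 + 1) / 2
    lia

theorem ratCode_eq (q : ℚ) : ratCode q = Nat.pair (Equiv.intEquivNat q.num) q.den := rfl

theorem isRatCode_ratCode (q : ℚ) : IsRatCode (ratCode q) := by
  rw [ratCode_eq, IsRatCode, Nat.unpair_pair]
  refine ⟨q.den_pos, ?_⟩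
  rw [← natAbs_eq_code]
  exact q.reduced

theorem exists_ratCode {m : ℕ} (h : IsRatCode m) : ∃ q, ratCode q = m := by
  obtain ⟨h1, h2⟩ := h
  have hc : (Equiv.intEquivNat.symm (Nat.unpair m).1).natAbs.Coprime (Nat.unpair m).2 := by
    rwa [natAbs_eq_code, Equiv.apply_symm_apply]
  refine ⟨⟨Equiv.intEquivNat.symm (Nat.unpair m).1, (Nat.unpair m).2, h1.ne', hc⟩, ?_⟩
  change Nat.pair (Equiv.intEquivNat (Equiv.intEquivNat.symm (Nat.unpair m).1)) (Nat.unpair m).2 = m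
  rw [Equiv.apply_symm_apply, Nat.pair_unpair]

/-- The code of a rational number with respect to which functions to `ℚ` are computable. -/
def ratIndex (q : ℚ) : ℕ := @Encodable.encode ℚ Primcodable.toEncodable q

theorem primrec_ratIndex : Primrec ratIndex := Primrec.encode

/-- The index of `q` is the rank of `ratCode q` among all the values of
`ratCode`. -/
theorem ratIndex_eq_count (q : ℚ) : ratIndex q = Nat.count IsRatCode (ratCode q) := by
  rw [Nat.count_eq_card_filter_range]
  trans ((List.range (ratCode q)).countP
    (fun m => @decide _ (@Encodable.decidableRangeEncode ℚ Rat.instEncodable m)))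
  · rfl
  · rw [List.countP_eq_length_filter]
    have : ∀ m, m ∈ Set.range (@Encodable.encode ℚ Rat.instEncodable) ↔ IsRatCode m := fun m =>
      ⟨fun ⟨q, hq⟩ => hq ▸ isRatCode_ratCode q, exists_ratCode⟩
    simp [Finset.card, Finset.filter, Finset.range, Multiset.range, this]

theorem primrecPred_isRatCode : PrimrecPred IsRatCode := by
  have h1 : PrimrecRel fun k m : ℕ =>
      ¬ ((((Nat.unpair m).1 + 1) / 2) % k = 0 ∧ (Nat.unpair m).2 % k = 0) ∨ k = 1 := by
    have hu : Primrec fun p : ℕ × ℕ => Nat.unpair p.2 := Primrec.unpair.comp Primrec.snd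
    have hn : Primrec fun p : ℕ × ℕ => ((Nat.unpair p.2).1 + 1) / 2 :=
      Primrec.nat_div.comp (Primrec.succ.comp (Primrec.fst.comp hu)) (Primrec.const 2)
    exact ((((Primrec.eq.comp (Primrec.nat_mod.comp hn Primrec.fst) (Primrec.const 0)).and
      (Primrec.eq.comp (Primrec.nat_mod.comp (Primrec.snd.comp hu) Primrec.fst)
        (Primrec.const 0))).not).or (Primrec.eq.comp Primrec.fst (Primrec.const 1)))
  have h2 : PrimrecPred fun m : ℕ => ∀ k < (Nat.unpair m).2 + 1,
      ¬ ((((Nat.unpair m).1 + 1) / 2) % k = 0 ∧ (Nat.unpair m).2 % k = 0) ∨ k = 1 :=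
    (h1.forall_lt).comp (Primrec.succ.comp (Primrec.snd.comp Primrec.unpair)) Primrec.id
  have h3 : PrimrecPred fun m : ℕ => 0 < (Nat.unpair m).2 :=
    Primrec.nat_lt.comp (Primrec.const 0) (Primrec.snd.comp Primrec.unpair)
  refine (h3.and h2).of_eq fun m => ?_
  refine and_congr_right fun hpos => ⟨fun h => ?_, fun h k _ => ?_⟩
  · rcases h (Nat.gcd (((Nat.unpair m).1 + 1) / 2) (Nat.unpair m).2)
      (Nat.lt_succ_of_le (Nat.gcd_le_right _ hpos)) with h | h
    · exact absurd ⟨Nat.mod_eq_zero_of_dvd (Nat.gcd_dvd_left _ _),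
        Nat.mod_eq_zero_of_dvd (Nat.gcd_dvd_right _ _)⟩ h
    · exact h
  · by_cases hk : (((Nat.unpair m).1 + 1) / 2) % k = 0 ∧ (Nat.unpair m).2 % k = 0
    · exact Or.inr (Nat.eq_one_of_dvd_coprimes h (Nat.dvd_of_mod_eq_zero hk.1)
        (Nat.dvd_of_mod_eq_zero hk.2))
    · exact Or.inl hk

theorem primrec_count_isRatCode : Primrec (Nat.count IsRatCode) := by
  have : Primrec₂ fun (n c : ℕ) => if IsRatCode n then c + 1 else c :=
    Primrec.ite (primrecPred_isRatCode.comp Primrec.fst) (Primrec.succ.comp Primrec.snd) Primrec.snd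
  refine (Primrec.nat_rec₁ 0 this).of_eq fun n => ?_
  induction n with
  | zero => simp
  | succ n ih =>
    rw [Nat.count_succ, ← ih]
    dsimp only
    split_ifs <;> rfl

/-- `ratCode q` is found by searching for the value of `ratCode` whose rank is the index of `q`. -/
theorem computable_ratCode : Computable ratCode := by
  have ht : Computable₂ fun (q : ℚ) (m : ℕ) =>
      decide (IsRatCode m ∧ Nat.count IsRatCode m = ratIndex q) :=
    (PrimrecPred.decide ((primrecPred_isRatCode.comp Primrec.snd).and
      (Primrec.eq.comp (primrec_count_isRatCode.comp Primrec.snd)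
        (primrec_ratIndex.comp Primrec.fst)))).to_comp
  have hr : Partrec fun q : ℚ => Nat.rfind fun m =>
      Part.some (decide (IsRatCode m ∧ Nat.count IsRatCode m = ratIndex q)) :=
    Partrec.rfind ht.partrec₂
  refine hr.of_eq fun q => ?_
  refine Part.eq_some_iff.2 (Nat.mem_rfind.2 ⟨?_, fun {m} hm => ?_⟩)
  · simpa using ⟨isRatCode_ratCode q, (ratIndex_eq_count q).symm⟩
  · have : ¬ (IsRatCode m ∧ Nat.count IsRatCode m = ratIndex q) := fun h =>
      hm.ne (Nat.count_injective h.1 (isRatCode_ratCode q) (h.2.trans (ratIndex_eq_count q)))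
    simpa using this

theorem computable_rat_le : Computable₂ fun (q : ℚ) (k : ℕ) => decide (q ≤ k) := by
  have hu : Primrec fun p : ℕ × ℕ => Nat.unpair p.1 := Primrec.unpair.comp Primrec.fst
  have h1 : PrimrecPred fun p : ℕ × ℕ =>
      (Nat.unpair p.1).1 % 2 = 1 ∨ (Nat.unpair p.1).1 / 2 ≤ p.2 * (Nat.unpair p.1).2 :=
    (Primrec.eq.comp (Primrec.nat_mod.comp (Primrec.fst.comp hu) (Primrec.const 2))
      (Primrec.const 1)).or
    (Primrec.nat_le.comp (Primrec.nat_div.comp (Primrec.fst.comp hu) (Primrec.const 2))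
      (Primrec.nat_mul.comp Primrec.snd (Primrec.snd.comp hu)))
  have h2 := h1.decide.to_comp.comp
    ((computable_ratCode.comp (Computable.fst (α := ℚ) (β := ℕ))).pair Computable.snd)
  refine Computable.of_eq h2 fun ⟨q, k⟩ => ?_
  simp only [ratCode_eq, Nat.unpair_pair]
  congr 1
  rw [eq_iff_iff, Rat.le_iff]
  simp only [Rat.num_natCast, Rat.den_natCast, Nat.cast_one, mul_one]
  obtain ⟨z, d, hd, hc⟩ := q
  cases z with
  | ofNat n =>
    have : Equiv.intEquivNat (Int.ofNat n) = 2 * n := rfl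
    rw [this]
    simp only [Int.ofNat_eq_natCast]
    norm_cast
    generalize k * d = e
    lia
  | negSucc n =>
    have : Equiv.intEquivNat (Int.negSucc n) = 2 * n + 1 := rfl
    rw [this]
    simp only
    have : (0 : ℤ) ≤ k * d := by positivity
    lia

/-! ### Binary values of programs -/

/-- The natural number with binary expansion `p`, most significant bit first. -/
def binVal (p : List Bool) : ℕ := p.foldl (fun a b => 2 * a + b.toNat) 0

theorem primrec_binVal : Primrec binVal := by
  have : Primrec₂ fun (_ : List Bool) (s : ℕ × Bool) => 2 * s.1 + s.2.toNat :=
    Primrec.nat_add.comp (Primrec.nat_mul.comp (Primrec.const 2) (Primrec.fst.comp Primrec.snd))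
      ((Primrec.dom_bool Bool.toNat).comp (Primrec.snd.comp Primrec.snd))
  exact Primrec.list_foldl Primrec.id (Primrec.const 0) this

theorem binVal_concat (p : List Bool) (b : Bool) :
    binVal (p ++ [b]) = 2 * binVal p + b.toNat := by
  simp [binVal]

theorem binVal_append (p r : List Bool) :
    binVal (p ++ r) = binVal p * 2 ^ r.length + binVal r := by
  induction r using List.reverseRecOn with
  | nil => simp [binVal]
  | append_singleton r b ih =>
    rw [← List.append_assoc, binVal_concat, binVal_concat, ih]
    simp only [List.length_append, List.length_singleton, pow_succ]
    ring

theorem binVal_lt (p : List Bool) : binVal p < 2 ^ p.length := by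
  induction p using List.reverseRecOn with
  | nil => simp [binVal]
  | append_singleton r b ih =>
    rw [binVal_concat, List.length_append, List.length_singleton, pow_succ]
    cases b <;> simp <;> lia

theorem exists_binVal_eq (n : ℕ) : ∀ a < 2 ^ n, ∃ p : List Bool, p.length = n ∧ binVal p = a := by
  induction n with
  | zero => exact fun a ha => ⟨[], rfl, by rw [pow_zero, Nat.lt_one_iff] at ha; simp [binVal, ha]⟩
  | succ n ih =>
    intro a ha
    obtain ⟨p, hp, hv⟩ := ih (a / 2) (by rw [pow_succ] at ha; lia)
    refine ⟨p ++ [decide (a % 2 = 1)], by simp [hp], ?_⟩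
    rw [binVal_concat, hv]
    rcases Nat.mod_two_eq_zero_or_one a with h | h <;> simp [h] <;> lia

/-! ### Machines from request sequences -/

/-- The weight `2 ^ (-l)` of an optional request `(y, l)`, which asks for a program of length about
`l` with output `y`. -/
noncomputable def reqWeight (o : Option (List Bool × ℕ)) : ℝ := o.elim 0 fun r => (1 / 2) ^ r.2

theorem reqWeight_nonneg (o : Option (List Bool × ℕ)) : 0 ≤ reqWeight o := by
  cases o <;> simp [reqWeight]

/-- The weight of the `i`-th request times `2 ^ (i + 1)`; integral when `l ≤ i + 1`. -/
def scaledWeight (i : ℕ) (o : Option (List Bool × ℕ)) : ℕ := o.elim 0 fun r => 2 ^ (i + 1 - r.2)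

/-- The total weight of the first `i` requests, times `2 ^ i`. -/
def scaledSum (R : ℕ → Option (List Bool × ℕ)) (i : ℕ) : ℕ :=
  Nat.rec 0 (fun j t => 2 * t + scaledWeight j (R j)) i

/-- Numerator of the left endpoint, over the denominator `2 ^ (l + 1)`, of a dyadic interval inside
the interval allotted to the `i`-th request, where `l` is the requested length. -/
def startPoint (R : ℕ → Option (List Bool × ℕ)) (i l : ℕ) : ℕ :=
  scaledSum R i * 2 ^ (l + 1) / 2 ^ i + 1

/-- The program `p` is the one allotted to the `i`-th request. -/
def isProgram (R : ℕ → Option (List Bool × ℕ)) (p : List Bool) (i : ℕ) : Bool :=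
  (R i).elim false fun r => decide (p.length = r.2 + 1 ∧ binVal p = startPoint R i r.2)

theorem scaledSum_eq {R : ℕ → Option (List Bool × ℕ)} (hR : ∀ i, ∀ r ∈ R i, r.2 ≤ i + 1) (i : ℕ) :
    (scaledSum R i : ℝ) / 2 ^ i = ∑ j ∈ Finset.range i, reqWeight (R j) := by
  induction i with
  | zero => simp [scaledSum]
  | succ i ih =>
    have hs : scaledSum R (i + 1) = 2 * scaledSum R i + scaledWeight i (R i) := rfl
    have hw : (scaledWeight i (R i) : ℝ) / 2 ^ (i + 1) = reqWeight (R i) := by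
      have := hR i
      cases h : R i with
      | none => simp [scaledWeight, reqWeight]
      | some r =>
        have hr : r.2 ≤ i + 1 := this r (by simp [h])
        simp only [scaledWeight, reqWeight, Option.elim_some, Nat.cast_pow, Nat.cast_ofNat]
        rw [pow_sub₀ _ (by norm_num) hr, one_div, inv_pow]
        field_simp
    rw [Finset.sum_range_succ, ← ih, hs, ← hw, pow_succ]
    push_cast
    field_simp

theorem startPoint_bounds {R : ℕ → Option (List Bool × ℕ)} (hR : ∀ i, ∀ r ∈ R i, r.2 ≤ i + 1)
    {i : ℕ} {r : List Bool × ℕ} (hr : r ∈ R i) :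
    ∑ j ∈ Finset.range i, reqWeight (R j) < (startPoint R i r.2 : ℝ) / 2 ^ (r.2 + 1) ∧
    ((startPoint R i r.2 : ℝ) + 1) / 2 ^ (r.2 + 1) ≤
      ∑ j ∈ Finset.range (i + 1), reqWeight (R j) := by
  rw [Finset.sum_range_succ, ← scaledSum_eq hR]
  have hw : reqWeight (R i) = 2 / 2 ^ (r.2 + 1) := by
    rw [Option.mem_def.1 hr, reqWeight, Option.elim_some, one_div, inv_pow, pow_succ]
    field_simp
  rw [hw, startPoint]
  set N := scaledSum R i * 2 ^ (r.2 + 1)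
  have h1 : N < 2 ^ i * (N / 2 ^ i + 1) := Nat.lt_mul_div_succ N (by positivity)
  have h2 : N / 2 ^ i * 2 ^ i ≤ N := Nat.div_mul_le_self N (2 ^ i)
  have e : (N : ℝ) = scaledSum R i * 2 ^ (r.2 + 1) := by simp [N]
  have h1' : (N : ℝ) < 2 ^ i * ((N / 2 ^ i : ℕ) + 1) := by exact_mod_cast h1
  have h2' : ((N / 2 ^ i : ℕ) : ℝ) * 2 ^ i ≤ N := by exact_mod_cast h2
  rw [e] at h1' h2'
  constructor
  · rw [div_lt_div_iff₀ (by positivity) (by positivity)]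
    push_cast
    linarith
  · rw [← sub_le_iff_le_add, ← sub_div, div_le_div_iff₀ (by positivity) (by positivity)]
    push_cast
    linarith

theorem isProgram_iff {R : ℕ → Option (List Bool × ℕ)} {p : List Bool} {i : ℕ} :
    isProgram R p i = true ↔
      ∃ r ∈ R i, p.length = r.2 + 1 ∧ binVal p = startPoint R i r.2 := by
  rw [isProgram]
  cases R i <;> simp

theorem isProgram_bounds {R : ℕ → Option (List Bool × ℕ)} (hR : ∀ i, ∀ r ∈ R i, r.2 ≤ i + 1)
    {i : ℕ} {p : List Bool} (h : isProgram R p i = true) :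
    ∑ j ∈ Finset.range i, reqWeight (R j) < (binVal p : ℝ) / 2 ^ p.length ∧
    ((binVal p : ℝ) + 1) / 2 ^ p.length ≤ ∑ j ∈ Finset.range (i + 1), reqWeight (R j) := by
  obtain ⟨r, hr, hl, hv⟩ := isProgram_iff.1 h
  rw [hl, hv]
  exact startPoint_bounds hR hr

theorem reqSum_mono (R : ℕ → Option (List Bool × ℕ)) :
    Monotone fun n => ∑ j ∈ Finset.range n, reqWeight (R j) :=
  monotone_nat_of_le_succ fun n => by
    rw [Finset.sum_range_succ]
    linarith [reqWeight_nonneg (R n)]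

/-- Programs allotted to requests form a prefix-free set, and each serves only one request: the
dyadic interval of an extension of `p` lies inside that of `p`, whereas intervals allotted to
different requests are disjoint. -/
theorem isProgram_prefix {R : ℕ → Option (List Bool × ℕ)} (hR : ∀ i, ∀ r ∈ R i, r.2 ≤ i + 1)
    {i j : ℕ} {p q : List Bool} (hp : isProgram R p i = true) (hq : isProgram R q j = true)
    (hpq : p <+: q) : i = j ∧ p = q := by
  obtain ⟨s, rfl⟩ := hpq
  obtain ⟨p1, p2⟩ := isProgram_bounds hR hp
  obtain ⟨q1, q2⟩ := isProgram_bounds hR hq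
  have hv : (binVal (p ++ s) : ℝ) = binVal p * 2 ^ s.length + binVal s := by
    exact_mod_cast binVal_append p s
  have hs : (binVal s : ℝ) + 1 ≤ 2 ^ s.length := by exact_mod_cast binVal_lt s
  have hs0 : (0 : ℝ) ≤ binVal s := by positivity
  have hlow : (binVal p : ℝ) / 2 ^ p.length ≤ binVal (p ++ s) / 2 ^ (p ++ s).length := by
    rw [List.length_append, pow_add, hv, div_le_div_iff₀ (by positivity) (by positivity)]
    nlinarith [mul_nonneg hs0 (pow_nonneg (zero_le_two (α := ℝ)) p.length)]
  have hhigh : ((binVal (p ++ s) : ℝ) + 1) / 2 ^ (p ++ s).length ≤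
      (binVal p + 1) / 2 ^ p.length := by
    rw [List.length_append, pow_add, hv, div_le_div_iff₀ (by positivity) (by positivity)]
    nlinarith [mul_le_mul_of_nonneg_right hs (pow_nonneg (zero_le_two (α := ℝ)) p.length)]
  have hstep : (binVal (p ++ s) : ℝ) / 2 ^ (p ++ s).length <
      ((binVal (p ++ s) : ℝ) + 1) / 2 ^ (p ++ s).length := by
    gcongr
    linarith
  have hstep' : (binVal p : ℝ) / 2 ^ p.length < ((binVal p : ℝ) + 1) / 2 ^ p.length := by
    gcongr
    linarith
  have hij : i = j := by
    rcases lt_trichotomy i j with h | h | h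
    · have := reqSum_mono R (Nat.succ_le_of_lt h)
      simp only [Nat.succ_eq_add_one] at this
      linarith
    · exact h
    · have := reqSum_mono R (Nat.succ_le_of_lt h)
      simp only [Nat.succ_eq_add_one] at this
      linarith
  subst hij
  obtain ⟨r, hr, hl, -⟩ := isProgram_iff.1 hp
  obtain ⟨r', hr', hl', -⟩ := isProgram_iff.1 hq
  cases Option.mem_unique hr hr'
  exact ⟨rfl, (List.prefix_append p s).eq_of_length (by rw [hl, hl'])⟩

theorem computable_scaledSum {R : List Bool → ℕ → Option (List Bool × ℕ)} (hc : Computable₂ R) :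
    Computable₂ fun x i => scaledSum (R x) i := by
  have hw : Primrec₂ scaledWeight :=
    Primrec.of_eq (Primrec.option_casesOn (Primrec.snd (α := ℕ)) (Primrec.const 0)
      ((primrec_two_pow.comp (Primrec.nat_sub.comp
        (Primrec.succ.comp (Primrec.fst.comp Primrec.fst)) (Primrec.snd.comp Primrec.snd))).to₂))
      fun ⟨i, o⟩ => by cases o <;> rfl
  have hstep : Computable₂ fun (a : List Bool × ℕ) (s : ℕ × ℕ) =>
      2 * s.2 + scaledWeight s.1 (R a.1 s.1) :=
    Primrec.nat_add.to_comp.comp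
      (Primrec.nat_double.to_comp.comp (Computable.snd.comp Computable.snd))
      (hw.to_comp.comp (Computable.fst.comp Computable.snd)
        (hc.comp (Computable.fst.comp Computable.fst) (Computable.fst.comp Computable.snd)))
  exact Computable.nat_rec Computable.snd (Computable.const 0) hstep

theorem primrec_programTest : Primrec fun b : ((List Bool × ℕ) × ℕ) × ℕ =>
    decide (b.1.1.1.length = b.2 + 1 ∧
      binVal b.1.1.1 = b.1.2 * 2 ^ (b.2 + 1) / 2 ^ b.1.1.2 + 1) := by
  have hp : Primrec fun b : ((List Bool × ℕ) × ℕ) × ℕ => b.1.1.1 :=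
    Primrec.fst.comp (Primrec.fst.comp Primrec.fst)
  have hi : Primrec fun b : ((List Bool × ℕ) × ℕ) × ℕ => b.1.1.2 :=
    Primrec.snd.comp (Primrec.fst.comp Primrec.fst)
  have hs : Primrec fun b : ((List Bool × ℕ) × ℕ) × ℕ => b.1.2 := Primrec.snd.comp Primrec.fst
  have hl : Primrec fun b : ((List Bool × ℕ) × ℕ) × ℕ => b.2 + 1 :=
    Primrec.succ.comp Primrec.snd
  exact ((Primrec.eq.comp (Primrec.list_length.comp hp) hl).and
    (Primrec.eq.comp (primrec_binVal.comp hp)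
      (Primrec.succ.comp (Primrec.nat_div.comp
        (Primrec.nat_mul.comp hs (primrec_two_pow.comp hl)) (primrec_two_pow.comp hi))))).decide

theorem computable_isProgram {R : List Bool → ℕ → Option (List Bool × ℕ)} (hc : Computable₂ R) :
    Computable₂ fun (a : List Bool × List Bool) i => isProgram (R a.2) a.1 i := by
  have hR : Computable fun a : (List Bool × List Bool) × ℕ => R a.1.2 a.2 :=
    hc.comp (Computable.snd.comp Computable.fst) Computable.snd
  have hT : Computable fun a : (List Bool × List Bool) × ℕ => scaledSum (R a.1.2) a.2 :=
    (computable_scaledSum hc).comp (Computable.snd.comp Computable.fst) Computable.snd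
  have h2 : Computable₂ fun (a : (List Bool × List Bool) × ℕ) (r : List Bool × ℕ) =>
      decide (a.1.1.length = r.2 + 1 ∧ binVal a.1.1 = startPoint (R a.1.2) a.2 r.2) :=
    primrec_programTest.to_comp.comp (g := fun z : ((List Bool × List Bool) × ℕ) ×
        (List Bool × ℕ) => (((z.1.1.1, z.1.2), scaledSum (R z.1.1.2) z.1.2), z.2.2))
      ((((Computable.fst.comp (Computable.fst.comp Computable.fst)).pair
        (Computable.snd.comp Computable.fst)).pair (hT.comp Computable.fst)).pair
        (Computable.snd.comp Computable.snd))
  refine Computable.of_eq (Computable.option_casesOn hR (Computable.const false) h2) fun a => ?_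
  change _ = isProgram (R a.1.2) a.1.1 a.2
  rw [isProgram]
  cases R a.1.2 a.2 <;> rfl

/-- The machine which, on program `p` and input `x`, searches for a request in `R x` to which `p` is
allotted and returns the output asked for. -/
def requestMachine (R : List Bool → ℕ → Option (List Bool × ℕ)) (hc : Computable₂ R)
    (hR : ∀ x i, ∀ r ∈ R x i, r.2 ≤ i + 1) : PrefixMachine where
  eval p x := (Nat.rfind fun i => Part.some (isProgram (R x) p i)).map
    fun i => ((R x i).getD ([], 0)).1
  partrec := by
    have h1 : Partrec fun a : List Bool × List Bool =>
        Nat.rfind fun i => Part.some (isProgram (R a.2) a.1 i) :=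
      Partrec.rfind (computable_isProgram hc).partrec₂
    have h2 : Computable₂ fun (a : List Bool × List Bool) (i : ℕ) =>
        ((R a.2 i).getD ([], 0)).1 :=
      Computable.fst.comp (Computable.option_getD
        (hc.comp (Computable.snd.comp Computable.fst) Computable.snd) (Computable.const ([], 0)))
    exact h1.map h2
  prefixFree := by
    intro x p q hp hq hpq
    obtain ⟨i, hi⟩ := Part.dom_iff_mem.1 (show (Nat.rfind _).Dom from hp)
    obtain ⟨j, hj⟩ := Part.dom_iff_mem.1 (show (Nat.rfind _).Dom from hq)
    have hi' := Part.mem_some_iff.1 (Nat.rfind_spec hi)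
    have hj' := Part.mem_some_iff.1 (Nat.rfind_spec hj)
    exact (isProgram_prefix (hR x) hi'.symm hj'.symm hpq).2

/-- If the weights of the requests add up to at most `1`, then every request `(y, l)` is served by
a program of length `l + 1`. -/
theorem requestMachine_spec (R : List Bool → ℕ → Option (List Bool × ℕ)) (hc : Computable₂ R)
    (hR : ∀ x i, ∀ r ∈ R x i, r.2 ≤ i + 1)
    (hsum : ∀ x n, ∑ j ∈ Finset.range n, reqWeight (R x j) ≤ 1)
    {x : List Bool} {i : ℕ} {r : List Bool × ℕ} (hr : r ∈ R x i) :
    ∃ p : List Bool, p.length = r.2 + 1 ∧ r.1 ∈ (requestMachine R hc hR).eval p x := by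
  have hlt : startPoint (R x) i r.2 < 2 ^ (r.2 + 1) := by
    have h := (startPoint_bounds (hR x) hr).2.trans (hsum x (i + 1))
    rw [div_le_one (by positivity)] at h
    exact_mod_cast h
  obtain ⟨p, hl, hv⟩ := exists_binVal_eq _ _ hlt
  refine ⟨p, hl, ?_⟩
  have hp : isProgram (R x) p i = true := isProgram_iff.2 ⟨r, hr, hl, hv⟩
  have hmem : i ∈ Nat.rfind fun i => Part.some (isProgram (R x) p i) := by
    refine Nat.mem_rfind.2 ⟨by simp [hp], fun {m} hm => ?_⟩
    have : isProgram (R x) p m ≠ true := fun h =>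
      hm.ne (isProgram_prefix (hR x) h hp List.prefix_rfl).1
    simpa using this
  refine (Part.mem_map_iff _).2 ⟨i, hmem, ?_⟩
  rw [Option.mem_def.1 hr, Option.getD_some]

/-! ### The request sequence of an upper-semicomputable function -/

/-- `n` is the first stage at which the approximation `g` of `f (x, y)` is at most `k`. Only the
preceding stage is inspected, which suffices when `g` is decreasing. -/
def isFirst (g : List Bool × List Bool × ℕ → ℚ) (x : List Bool) (t : List Bool × ℕ × ℕ) : Bool :=
  decide (g (x, t.1, t.2.2) ≤ t.2.1) &&
    (decide (t.2.2 = 0) || !decide (g (x, t.1, t.2.2 - 1) ≤ t.2.1))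

/-- The request `(y, k + 1)` is issued at the code of `(y, k, n)` when `n` is the first stage at
which the bound `k` on `f (x, y)` becomes known. -/
def requests (g : List Bool × List Bool × ℕ → ℚ) (x : List Bool) (i : ℕ) :
    Option (List Bool × ℕ) :=
  (Encodable.decode₂ (List Bool × ℕ × ℕ) i).bind fun t =>
    bif isFirst g x t then some (t.1, t.2.1 + 1) else none

theorem computable_isFirst {g : List Bool × List Bool × ℕ → ℚ} (hg : Computable g) :
    Computable₂ (isFirst g) := by
  have hx : Computable fun a : List Bool × (List Bool × ℕ × ℕ) => a.1 := Computable.fst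
  have hy : Computable fun a : List Bool × (List Bool × ℕ × ℕ) => a.2.1 :=
    Computable.fst.comp Computable.snd
  have hk : Computable fun a : List Bool × (List Bool × ℕ × ℕ) => a.2.2.1 :=
    Computable.fst.comp (Computable.snd.comp Computable.snd)
  have hn : Computable fun a : List Bool × (List Bool × ℕ × ℕ) => a.2.2.2 :=
    Computable.snd.comp (Computable.snd.comp Computable.snd)
  have h1 := computable_rat_le.comp (hg.comp (hx.pair (hy.pair hn))) hk
  have h2 := computable_rat_le.comp (hg.comp (hx.pair (hy.pair (Computable.pred.comp hn)))) hk
  have h3 : Computable fun a : List Bool × (List Bool × ℕ × ℕ) => decide (a.2.2.2 = 0) :=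
    (Primrec.eq.decide.to_comp).comp hn (Computable.const 0)
  exact Primrec.and.to_comp.comp h1 (Primrec.or.to_comp.comp h3 (Primrec.not.to_comp.comp h2))

theorem computable_requests {g : List Bool × List Bool × ℕ → ℚ} (hg : Computable g) :
    Computable₂ (requests g) := by
  have hd : Computable fun a : List Bool × ℕ =>
      Encodable.decode₂ (List Bool × ℕ × ℕ) a.2 :=
    Primrec.decode₂.to_comp.comp Computable.snd
  have hb : Computable₂ fun (a : List Bool × ℕ) (t : List Bool × ℕ × ℕ) =>
      bif isFirst g a.1 t then some (t.1, t.2.1 + 1) else none :=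
    Computable.cond
      ((computable_isFirst hg).comp (Computable.fst.comp Computable.fst) Computable.snd)
      (Computable.option_some.comp ((Computable.fst.comp Computable.snd).pair
        (Computable.succ.comp (Computable.fst.comp (Computable.snd.comp Computable.snd)))))
      (Computable.const none)
  exact Computable.option_bind hd hb

theorem requests_le (g : List Bool × List Bool × ℕ → ℚ) (x : List Bool) (i : ℕ) :
    ∀ r ∈ requests g x i, r.2 ≤ i + 1 := by
  intro r hr
  obtain ⟨⟨y, k, n⟩, ht, hr⟩ := Option.bind_eq_some_iff.1 hr
  have hi := Encodable.mem_decode₂.1 ht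
  cases h : isFirst g x (y, k, n)
  · simp [h] at hr
  · rw [h, cond_true, Option.some.injEq] at hr
    subst hr
    rw [← hi, Encodable.encode_prod_val, Encodable.encode_prod_val]
    exact Nat.succ_le_succ ((Nat.left_le_pair k n).trans (Nat.right_le_pair _ _))

theorem requests_encode (g : List Bool × List Bool × ℕ → ℚ) (x : List Bool)
    (t : List Bool × ℕ × ℕ) :
    requests g x (Encodable.encode t) =
      bif isFirst g x t then some (t.1, t.2.1 + 1) else none := by
  rw [requests, Encodable.encodek₂, Option.bind_some]

theorem isFirst_unique {g : List Bool × List Bool × ℕ → ℚ} {x y : List Bool}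
    (hanti : Antitone fun n : ℕ => g (x, y, n)) {k m n : ℕ}
    (hm : isFirst g x (y, k, m) = true) (hn : isFirst g x (y, k, n) = true) : m = n := by
  have key : ∀ {a b : ℕ}, isFirst g x (y, k, a) = true → isFirst g x (y, k, b) = true →
      ¬ a < b := by
    intro a b ha hb hab
    simp only [isFirst, Bool.and_eq_true, Bool.or_eq_true, decide_eq_true_eq,
      Bool.not_eq_true', decide_eq_false_iff_not] at ha hb
    rcases hb.2 with h | h
    · lia
    · exact h ((hanti (Nat.le_sub_one_of_lt hab)).trans ha.1)
  exact le_antisymm (not_lt.1 (key hn hm)) (not_lt.1 (key hm hn))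

theorem exists_isFirst {g : List Bool × List Bool × ℕ → ℚ} {x y : List Bool} {k n : ℕ}
    (h : g (x, y, n) ≤ k) : ∃ m, isFirst g x (y, k, m) = true := by
  classical
  have hex : ∃ n, g (x, y, n) ≤ k := ⟨n, h⟩
  refine ⟨Nat.find hex, ?_⟩
  simp only [isFirst, Bool.and_eq_true, Bool.or_eq_true, decide_eq_true_eq,
    Bool.not_eq_true', decide_eq_false_iff_not]
  refine ⟨Nat.find_spec hex, ?_⟩
  rcases Nat.eq_zero_or_pos (Nat.find hex) with h0 | h0
  · exact Or.inl h0
  · exact Or.inr (Nat.find_min hex (Nat.sub_lt h0 one_pos))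

theorem tsum_half_pow_add (m : ℕ) :
    ∑' j : ℕ, ENNReal.ofReal ((1 / 2) ^ (j + m + 1)) = ENNReal.ofReal ((1 / 2) ^ m) := by
  have hs : HasSum (fun j : ℕ => ((1 : ℝ) / 2) ^ (j + m + 1)) ((1 / 2) ^ m) := by
    have h := hasSum_geometric_two.mul_right (((1 : ℝ) / 2) ^ (m + 1))
    have e : (2 : ℝ) * (1 / 2) ^ (m + 1) = (1 / 2) ^ m := by rw [pow_succ]; ring
    simpa only [e, ← pow_add, ← add_assoc] using h
  rw [← ENNReal.ofReal_tsum_of_nonneg (fun j => by positivity) hs.summable, hs.tsum_eq]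

/-- For a fixed `y`, each integer `k ≥ f (x, y)` causes at most one request, so that the total
weight of the requests for `y` is at most a geometric series with sum `2 ^ (-⌈f (x, y)⌉)`. -/
theorem tsum_requests_le {g : List Bool × List Bool × ℕ → ℚ} {x y : List Bool} {v : ℝ}
    (hanti : Antitone fun n : ℕ => g (x, y, n))
    (hlim : Filter.Tendsto (fun n : ℕ => (g (x, y, n) : ℝ)) Filter.atTop (nhds v)) :
    ∑' (k : ℕ) (n : ℕ), ENNReal.ofReal
      (reqWeight (bif isFirst g x (y, k, n) then some (y, k + 1) else none)) ≤
      (2 : ℝ≥0∞) ^ (-v) := by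
  have hle : ∀ n, v ≤ g (x, y, n) := fun n =>
    Antitone.le_of_tendsto (f := fun n : ℕ => (g (x, y, n) : ℝ))
      (fun a b hab => Rat.cast_le.2 (hanti hab)) hlim n
  have h1 : ∀ k : ℕ, ∑' n : ℕ, ENNReal.ofReal
      (reqWeight (bif isFirst g x (y, k, n) then some (y, k + 1) else none)) ≤
      if ⌈v⌉₊ ≤ k then ENNReal.ofReal ((1 / 2) ^ (k + 1)) else 0 := by
    intro k
    by_cases hk : ∃ n, isFirst g x (y, k, n) = true
    · obtain ⟨n, hn⟩ := hk
      have hvk : ⌈v⌉₊ ≤ k := by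
        have h := hn
        simp only [isFirst, Bool.and_eq_true, decide_eq_true_eq] at h
        exact Nat.ceil_le.2 ((hle n).trans (by exact_mod_cast h.1))
      rw [tsum_eq_single n, hn, if_pos hvk, cond_true, reqWeight, Option.elim_some]
      intro n' hn'
      have : isFirst g x (y, k, n') = false := by
        by_contra h
        exact hn' (isFirst_unique hanti (by simpa using h) hn)
      simp [this, reqWeight]
    · have : ∀ n, isFirst g x (y, k, n) = false := by simpa using hk
      simp [this, reqWeight]
  have h2 : ∑' k : ℕ, (if ⌈v⌉₊ ≤ k then ENNReal.ofReal ((1 / 2) ^ (k + 1)) else 0) =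
      ∑' j : ℕ, ENNReal.ofReal ((1 / 2) ^ (j + ⌈v⌉₊ + 1)) := by
    rw [← (add_left_injective ⌈v⌉₊).tsum_eq]
    · simp
    · intro k hk
      have : ⌈v⌉₊ ≤ k := by
        by_contra h
        exact hk (if_neg h)
      exact ⟨k - ⌈v⌉₊, Nat.sub_add_cancel this⟩
  calc _ ≤ _ := ENNReal.tsum_le_tsum h1
    _ = ENNReal.ofReal ((1 / 2) ^ ⌈v⌉₊) := h2.trans (tsum_half_pow_add _)
    _ = (2 : ℝ≥0∞) ^ (-(⌈v⌉₊ : ℝ)) := by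
      rw [ENNReal.rpow_neg, ENNReal.rpow_natCast, ENNReal.ofReal_pow (by norm_num), one_div,
        ENNReal.ofReal_inv_of_pos (by norm_num), ENNReal.inv_pow]
      simp
    _ ≤ _ := ENNReal.rpow_le_rpow_of_exponent_le (by norm_num) (neg_le_neg (Nat.le_ceil v))

theorem sum_requests_le {g : List Bool × List Bool × ℕ → ℚ} {f : List Bool → List Bool → ℝ}
    (hanti : ∀ x y : List Bool, Antitone fun n : ℕ => g (x, y, n))
    (hlim : ∀ x y : List Bool,
      Filter.Tendsto (fun n : ℕ => (g (x, y, n) : ℝ)) Filter.atTop (nhds (f x y)))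
    (hdens : ∀ x : List Bool, ∑' y : List Bool, (2 : ℝ≥0∞) ^ (-(f x y)) ≤ 1)
    (x : List Bool) (n : ℕ) : ∑ j ∈ Finset.range n, reqWeight (requests g x j) ≤ 1 := by
  rw [← ENNReal.ofReal_le_one, ENNReal.ofReal_sum_of_nonneg fun _ _ => reqWeight_nonneg _]
  refine (ENNReal.sum_le_tsum _).trans ?_
  have hinj : Function.Injective (Encodable.encode : List Bool × ℕ × ℕ → ℕ) :=
    Encodable.encode_injective
  rw [← hinj.tsum_eq]
  · simp only [requests_encode]
    rw [ENNReal.tsum_prod']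
    refine (ENNReal.tsum_le_tsum fun y => ?_).trans (hdens x)
    rw [ENNReal.tsum_prod']
    exact tsum_requests_le (hanti x y) (hlim x y)
  · intro i hi
    cases h : Encodable.decode₂ (List Bool × ℕ × ℕ) i with
    | none => simp [requests, h, reqWeight] at hi
    | some t => exact ⟨t, Encodable.mem_decode₂.1 h⟩

/-- Conditional coding theorem: for every upper-semicomputable `f` on pairs of
strings with `∑_y 2^{-f(x,y)} ≤ 1` for every `x`, there is a constant `c ≥ 0`
such that `K(y|x) ≤ f(x,y) + c` for all `x, y`. -/
theorem conditional_coding_theorem (U : UniversalPrefixMachine)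
    (f : List Bool → List Bool → ℝ)
    (hsemi : UpperSemicomputable2 f)
    (hdens : ∀ x : List Bool, ∑' y : List Bool, (2 : ℝ≥0∞) ^ (-(f x y)) ≤ 1) :
    ∃ c : ℕ, ∀ x y : List Bool, (K U y x : ℝ) ≤ f x y + c := by
  obtain ⟨g, hg, hanti, hlim⟩ := hsemi
  have hc := computable_requests hg
  obtain ⟨c, hU⟩ := U.universal (requestMachine (requests g) hc (requests_le g))
  refine ⟨c + 3, fun x y => ?_⟩
  have hf : 0 ≤ f x y := by
    by_contra hneg
    have h1 : (2 : ℝ≥0∞) ^ (-(f x y)) ≤ 1 := (ENNReal.le_tsum y).trans (hdens x)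
    exact absurd h1 (not_le.2 (ENNReal.one_lt_rpow (by norm_num) (by linarith)))
  obtain ⟨n, hn⟩ := ((hlim x y).eventually_lt_const (Nat.lt_floor_add_one (f x y))).exists
  obtain ⟨m, hm⟩ := exists_isFirst (g := g) (x := x) (y := y) (k := ⌊f x y⌋₊ + 1) (n := n)
    (by exact_mod_cast hn.le)
  have hr : (y, ⌊f x y⌋₊ + 1 + 1) ∈
      requests g x (Encodable.encode (y, ⌊f x y⌋₊ + 1, m)) := by
    rw [requests_encode, hm, cond_true, Option.mem_def]
  obtain ⟨p, hp, hpy⟩ := requestMachine_spec (requests g) hc (requests_le g)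
    (sum_requests_le hanti hlim hdens) hr
  obtain ⟨q, hq, hql⟩ := hU p x y hpy
  have hK : K U y x ≤ q.length := Nat.sInf_le ⟨q, rfl, hq⟩
  have h1 : (K U y x : ℝ) ≤ (⌊f x y⌋₊ + 1 + 1 + 1 + c : ℕ) := by
    rw [hp] at hql
    exact_mod_cast hK.trans hql
  have h2 := Nat.floor_le hf
  push_cast at h1 ⊢
  linarith
end

section
/- Arithmetic-coding nesting and disjointness: under the arithmetic-coding update rule, the interval after step i+1 is contained in the interval after step i, and for two distinct token sequences of the same length (with the same conditional probability models, all probabilities strictly positive), the two final encoding intervals are disjoint; consequently, any real number r with I_low ≤ r < I_high determines the original token sequence uniquely. -/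
/-!
Appending one token `t` to a sequence `s` replaces the interval `encode M s` by its image under
`encStep (M s) · t` (`encode_append_singleton`). Inside an interval of nonnegative width, the
one-step subintervals stay within it, because cumulative probabilities lie in `[0, 1]`
(`encStep_Ico_subset`), and those of two different tokens do not overlap, because
`F(v) + P(v) ≤ F(w)` for `v < w` (`eq_of_mem_encStep_Ico`). Decoding uniqueness follows by removing
last tokens: by nesting, a common point of two final intervals lies in both intervals before the
last step, so by induction the two sequences agree up to the last token; the last tokens then agree
by the one-step statement. Disjointness is the contrapositive.
-/

variable {α : Type*} [Fintype α] [LinearOrder α]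

/-- The cumulative probability strictly below a symbol `v`:
`F(v) = ∑_{w < v} P(w)`. -/
def cumBelow (P : α → ℝ) (v : α) : ℝ :=
  ∑ w ∈ Finset.univ.filter (· < v), P w

/-- One arithmetic-coding step: given the model output `P` for the current
position, the current interval `(l, h)` is replaced by the subinterval
corresponding to token `t`. -/
def encStep (P : α → ℝ) (lh : ℝ × ℝ) (t : α) : ℝ × ℝ :=
  (lh.1 + (lh.2 - lh.1) * cumBelow P t,
   lh.1 + (lh.2 - lh.1) * (cumBelow P t + P t))

/-- Arithmetic-coding encoder, processing the remaining tokens starting from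
the already-processed prefix `s` and current interval `lh`. -/
def encodeAux (M : List α → α → ℝ) : List α → ℝ × ℝ → List α → ℝ × ℝ
  | _, lh, [] => lh
  | s, lh, t :: ts => encodeAux M (s ++ [t]) (encStep (M s) lh t) ts

/-- Arithmetic-coding encoder: maps a token sequence to its final interval
`(I_low, I_high)`, starting from `[0, 1)`. -/
def encode (M : List α → α → ℝ) (ts : List α) : ℝ × ℝ :=
  encodeAux M [] (0, 1) ts

theorem encodeAux_append_singleton (M : List α → α → ℝ) (ts : List α) (t : α) :
    ∀ (s : List α) (lh : ℝ × ℝ),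
      encodeAux M s lh (ts ++ [t]) = encStep (M (s ++ ts)) (encodeAux M s lh ts) t := by
  induction ts with
  | nil => intro s lh; simp [encodeAux]
  | cons a ts ih => intro s lh; simp [encodeAux, ih]

/-- The encoder, defined by consuming tokens from the front, also satisfies the update rule at the
end of the sequence. -/
theorem encode_append_singleton (M : List α → α → ℝ) (s : List α) (t : α) :
    encode M (s ++ [t]) = encStep (M s) (encode M s) t := by
  simp [encode, encodeAux_append_singleton]

theorem cumBelow_add_eq (P : α → ℝ) (v : α) :
    cumBelow P v + P v = ∑ w ∈ Finset.univ.filter (· ≤ v), P w := by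
  have h : Finset.univ.filter (· ≤ v) = insert v (Finset.univ.filter (· < v)) := by
    ext w
    simp [le_iff_eq_or_lt]
  rw [h, Finset.sum_insert (by simp), cumBelow, add_comm]

theorem cumBelow_nonneg {P : α → ℝ} (hP : ∀ v, 0 < P v) (v : α) : 0 ≤ cumBelow P v :=
  Finset.sum_nonneg fun w _ => (hP w).le

theorem cumBelow_add_le_one {P : α → ℝ} (hP : ∀ v, 0 < P v) (hsum : ∑ v, P v = 1) (v : α) :
    cumBelow P v + P v ≤ 1 := by
  rw [cumBelow_add_eq, ← hsum]
  exact Finset.sum_le_sum_of_subset_of_nonneg (Finset.subset_univ _) fun w _ _ => (hP w).le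

theorem cumBelow_add_le_of_lt {P : α → ℝ} (hP : ∀ v, 0 < P v) {v w : α} (h : v < w) :
    cumBelow P v + P v ≤ cumBelow P w := by
  rw [cumBelow_add_eq, cumBelow]
  refine Finset.sum_le_sum_of_subset_of_nonneg (fun x hx => ?_) fun x _ _ => (hP x).le
  simp only [Finset.mem_filter, Finset.mem_univ, true_and] at hx ⊢
  exact hx.trans_lt h

theorem encode_fst_le_snd {M : List α → α → ℝ} (hpos : ∀ s v, 0 < M s v) (s : List α) :
    (encode M s).1 ≤ (encode M s).2 := by
  induction s using List.reverseRecOn with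
  | nil => simp [encode, encodeAux]
  | append_singleton s t ih =>
    rw [encode_append_singleton]
    simp only [encStep]
    nlinarith [mul_nonneg (sub_nonneg.2 ih) (hpos s t).le]

theorem encStep_Ico_subset {P : α → ℝ} (hP : ∀ v, 0 < P v) (hsum : ∑ v, P v = 1)
    {lh : ℝ × ℝ} (hlh : lh.1 ≤ lh.2) (t : α) :
    Set.Ico (encStep P lh t).1 (encStep P lh t).2 ⊆ Set.Ico lh.1 lh.2 := by
  apply Set.Ico_subset_Ico
  · have := mul_nonneg (sub_nonneg.2 hlh) (cumBelow_nonneg hP t)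
    simp only [encStep]
    linarith
  · have := mul_le_mul_of_nonneg_left (cumBelow_add_le_one hP hsum t) (sub_nonneg.2 hlh)
    simp only [encStep]
    linarith

theorem encStep_snd_le_fst_of_lt {P : α → ℝ} (hP : ∀ v, 0 < P v)
    {lh : ℝ × ℝ} (hlh : lh.1 ≤ lh.2) {t u : α} (h : t < u) :
    (encStep P lh t).2 ≤ (encStep P lh u).1 := by
  have := mul_le_mul_of_nonneg_left (cumBelow_add_le_of_lt hP h) (sub_nonneg.2 hlh)
  simp only [encStep]
  linarith

/-- One-step decoding is unique: the subintervals of distinct tokens do not overlap. -/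
theorem eq_of_mem_encStep_Ico {P : α → ℝ} (hP : ∀ v, 0 < P v)
    {lh : ℝ × ℝ} (hlh : lh.1 ≤ lh.2) {t u : α} {r : ℝ}
    (ht : r ∈ Set.Ico (encStep P lh t).1 (encStep P lh t).2)
    (hu : r ∈ Set.Ico (encStep P lh u).1 (encStep P lh u).2) : t = u := by
  rcases lt_trichotomy t u with h | h | h
  · exact absurd (ht.2.trans_le ((encStep_snd_le_fst_of_lt hP hlh h).trans hu.1)) (lt_irrefl r)
  · exact h
  · exact absurd (hu.2.trans_le ((encStep_snd_le_fst_of_lt hP hlh h).trans ht.1)) (lt_irrefl r)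

theorem encode_nested {M : List α → α → ℝ} (hpos : ∀ s v, 0 < M s v)
    (hsum : ∀ s, ∑ v, M s v = 1) (s : List α) (t : α) :
    Set.Ico (encode M (s ++ [t])).1 (encode M (s ++ [t])).2 ⊆
      Set.Ico (encode M s).1 (encode M s).2 := by
  rw [encode_append_singleton]
  exact encStep_Ico_subset (hpos s) (hsum s) (encode_fst_le_snd hpos s) t

/-- Unique decoding, by induction on removing the last token. -/
theorem eq_of_mem_encode_Ico {M : List α → α → ℝ} (hpos : ∀ s v, 0 < M s v)
    (hsum : ∀ s, ∑ v, M s v = 1) {r : ℝ} (ts₁ : List α) :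
    ∀ ts₂ : List α, ts₁.length = ts₂.length →
      r ∈ Set.Ico (encode M ts₁).1 (encode M ts₁).2 →
      r ∈ Set.Ico (encode M ts₂).1 (encode M ts₂).2 → ts₁ = ts₂ := by
  induction ts₁ using List.reverseRecOn with
  | nil => intro ts₂ hlen _ _; exact (List.length_eq_zero_iff.1 hlen.symm).symm
  | append_singleton s t ih =>
    intro ts₂ hlen h₁ h₂
    rcases List.eq_nil_or_concat ts₂ with rfl | ⟨s', u, rfl⟩
    · simp at hlen
    · simp only [List.concat_eq_append] at *
      obtain rfl : s = s' := ih s' (by simpa using hlen)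
        (encode_nested hpos hsum s t h₁) (encode_nested hpos hsum s' u h₂)
      rw [encode_append_singleton] at h₁ h₂
      rw [eq_of_mem_encStep_Ico (hpos s) (encode_fst_le_snd hpos s) h₁ h₂]

/-- Arithmetic-coding nesting and disjointness: each step shrinks the interval,
distinct equal-length token sequences get disjoint final intervals, and hence
any real in the final interval determines the token sequence uniquely. -/
theorem arithmetic_coding_nesting_disjoint (M : List α → α → ℝ)
    (hpos : ∀ (s : List α) (v : α), 0 < M s v)
    (hsum : ∀ s : List α, ∑ v : α, M s v = 1) :
    (∀ (s : List α) (t : α),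
      Set.Ico (encode M (s ++ [t])).1 (encode M (s ++ [t])).2 ⊆
        Set.Ico (encode M s).1 (encode M s).2) ∧
    (∀ ts₁ ts₂ : List α, ts₁.length = ts₂.length → ts₁ ≠ ts₂ →
      Disjoint (Set.Ico (encode M ts₁).1 (encode M ts₁).2)
        (Set.Ico (encode M ts₂).1 (encode M ts₂).2)) ∧
    (∀ ts₁ ts₂ : List α, ts₁.length = ts₂.length → ∀ r : ℝ,
      r ∈ Set.Ico (encode M ts₁).1 (encode M ts₁).2 →
      r ∈ Set.Ico (encode M ts₂).1 (encode M ts₂).2 → ts₁ = ts₂) := by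
  have huniq := fun ts₁ ts₂ hlen (r : ℝ) =>
    eq_of_mem_encode_Ico hpos hsum (r := r) ts₁ ts₂ hlen
  refine ⟨encode_nested hpos hsum, fun ts₁ ts₂ hlen hne => ?_, huniq⟩
  exact Set.disjoint_left.2 fun r h₁ h₂ => hne (huniq ts₁ ts₂ hlen r h₁ h₂)
end
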